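/- If d is uniformly distributed on B_{f_d}(θ) and θ ≥ τΔ_K, then P(val(P_d) ≤ K) = μ_N(A_K(τ) ∩ B_{f_d}(θ)) / (θ^N μ_N(B_{f_d}(1))), and consequently Ĉ_K/μ_N(B_{f_d}(1)) · (τ/θ)^{N−K}(1 − δ̂_K τ/θ)^K − ε₀(K,τ,θ)/μ_N(B_{f_d}(1)) ≤ P(val(P_d) ≤ K) ≤ Ĉ_K/μ_N(B_{f_d}(1)) · (τ/θ)^{N−K}(1 + δ̂_K τ/θ)^K. -/

import Mathlib

open Submodule MeasureTheory Pointwise Filter Topology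

/-- A function `f` is a norm on the subspace `W` of `ℝ^N`. -/
def IsNormOn {N : ℕ} (f : EuclideanSpace ℝ (Fin N) → ℝ)
    (W : Submodule ℝ (EuclideanSpace ℝ (Fin N))) : Prop :=
  (∀ u ∈ W, 0 ≤ f u) ∧
  (∀ u ∈ W, (f u = 0 ↔ u = 0)) ∧
  (∀ (c : ℝ), ∀ u ∈ W, f (c • u) = |c| * f u) ∧
  (∀ u ∈ W, ∀ v ∈ W, f (u + v) ≤ f u + f v)

/-- `val(P_d)`: the minimal number of nonzero coefficients over all representations
`Σ λ_i ψ_i` of `d` within `‖·‖`-error `τ`. -/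
noncomputable def valP {N : ℕ} {ι : Type*} [Fintype ι]
    (ψ : ι → EuclideanSpace ℝ (Fin N)) (nn : EuclideanSpace ℝ (Fin N) → ℝ)
    (τ : ℝ) (d : EuclideanSpace ℝ (Fin N)) : ℕ :=
  sInf {k : ℕ | ∃ c : ι → ℝ, nn ((∑ i, c i • ψ i) - d) ≤ τ ∧ {i | c i ≠ 0}.ncard = k}

/-- `𝒥(K)`: a maximal family of subsets of the dictionary spanning pairwise distinct
`K`-dimensional subspaces. -/
def IsJFamily {N : ℕ} {ι : Type*} [Fintype ι] (ψ : ι → EuclideanSpace ℝ (Fin N))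
    (K : ℕ) (𝒥 : Set (Set ι)) : Prop :=
  (∀ J ∈ 𝒥, Module.finrank ℝ (Submodule.span ℝ (ψ '' J)) = K) ∧
  (∀ J₁ ∈ 𝒥, ∀ J₂ ∈ 𝒥, J₁ ≠ J₂ →
    Submodule.span ℝ (ψ '' J₁) ≠ Submodule.span ℝ (ψ '' J₂)) ∧
  (∀ J₁ : Set ι, Module.finrank ℝ (Submodule.span ℝ (ψ '' J₁)) = K →
    ∃ J ∈ 𝒥, Submodule.span ℝ (ψ '' J) = Submodule.span ℝ (ψ '' J₁))

/-- The constant `C_J = μ_{N−K}(P_{T_Jᗮ}(B_{‖·‖}(1))) · μ_K(T_J ∩ B_{f_d}(1))`. -/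
noncomputable def CJ {N : ℕ} {ι : Type*} [Fintype ι] (ψ : ι → EuclideanSpace ℝ (Fin N))
    (nn fd : EuclideanSpace ℝ (Fin N) → ℝ) (J : Set ι) : ENNReal :=
  volume ((fun w => orthogonalProjection (Submodule.span ℝ (ψ '' J))ᗮ w) '' {w | nn w ≤ 1})
    * volume ((fun v : Submodule.span ℝ (ψ '' J) =>
        (v : EuclideanSpace ℝ (Fin N))) ⁻¹' {w | fd w ≤ 1})

section helpers

variable {N : ℕ}

lemma aux_convex {f : (EuclideanSpace ℝ (Fin N)) → ℝ} (h : IsNormOn f ⊤) : ConvexOn ℝ Set.univ f := by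
  refine ⟨convex_univ, fun x _ y _ a b ha hb _ => ?_⟩
  calc f (a • x + b • y) ≤ f (a • x) + f (b • y) := h.2.2.2 _ trivial _ trivial
    _ = a • f x + b • f y := by
      rw [h.2.2.1 a x trivial, h.2.2.1 b y trivial, abs_of_nonneg ha, abs_of_nonneg hb]; rfl

lemma aux_cont {f : (EuclideanSpace ℝ (Fin N)) → ℝ} (h : IsNormOn f ⊤) : Continuous f := by
  have := (aux_convex h).continuousOn isOpen_univ
  exact continuousOn_univ.1 this

lemma aux_zero {f : (EuclideanSpace ℝ (Fin N)) → ℝ} (h : IsNormOn f ⊤) : f 0 = 0 := (h.2.1 0 trivial).2 rfl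

lemma aux_neg {f : (EuclideanSpace ℝ (Fin N)) → ℝ} (h : IsNormOn f ⊤) (x : EuclideanSpace ℝ (Fin N)) : f (-x) = f x := by
  have := h.2.2.1 (-1) x trivial
  simpa using this

lemma aux_eq_zero {f : (EuclideanSpace ℝ (Fin N)) → ℝ} (h : IsNormOn f ⊤) (x : EuclideanSpace ℝ (Fin N)) (hx : f x ≤ 0) : x = 0 :=
  (h.2.1 x trivial).1 (le_antisymm hx (h.1 x trivial))

lemma aux_upper {f : (EuclideanSpace ℝ (Fin N)) → ℝ} (h : IsNormOn f ⊤) : ∃ C, 0 < C ∧ ∀ x, f x ≤ C * ‖x‖ := by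
  obtain ⟨C, hC⟩ := (isCompact_sphere (0 : EuclideanSpace ℝ (Fin N)) 1).exists_bound_of_continuousOn
    (aux_cont h).continuousOn
  refine ⟨max C 1, by positivity, fun x => ?_⟩
  by_cases hx : x = 0
  · subst hx; simp [aux_zero h]
  have hx' : 0 < ‖x‖ := norm_pos_iff.2 hx
  have h1 := hC (‖x‖⁻¹ • x) (by simp [norm_smul, hx'.ne'])
  rw [h.2.2.1 _ _ trivial, abs_of_pos (by positivity)] at h1
  have h2 := (le_abs_self _).trans h1
  rw [inv_mul_le_iff₀ hx'] at h2
  calc f x ≤ ‖x‖ * C := h2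
    _ ≤ ‖x‖ * max C 1 := by gcongr; exact le_max_left _ _
    _ = _ := mul_comm _ _

lemma aux_lower {f : (EuclideanSpace ℝ (Fin N)) → ℝ} (h : IsNormOn f ⊤) : ∃ c, 0 < c ∧ ∀ x, ‖x‖ ≤ c * f x := by
  by_cases hne : (Metric.sphere (0 : EuclideanSpace ℝ (Fin N)) 1).Nonempty
  · obtain ⟨y, hy, hmin⟩ := (isCompact_sphere (0 : EuclideanSpace ℝ (Fin N)) 1).exists_isMinOn hne
      (aux_cont h).continuousOn
    have hy0 : 0 < f y := by
      by_contra hcon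
      have := aux_eq_zero h y (not_lt.1 hcon)
      subst this
      simp at hy
    refine ⟨(f y)⁻¹, by positivity, fun x => ?_⟩
    by_cases hx : x = 0
    · subst hx; simp [aux_zero h]
    have hx' : 0 < ‖x‖ := norm_pos_iff.2 hx
    have h1 : f y ≤ f (‖x‖⁻¹ • x) :=
      hmin (show ‖x‖⁻¹ • x ∈ Metric.sphere (0 : EuclideanSpace ℝ (Fin N)) 1 by simp [norm_smul, hx'.ne'])
    rw [h.2.2.1 _ _ trivial, abs_of_pos (by positivity), le_inv_mul_iff₀ hx'] at h1
    rw [le_inv_mul_iff₀ hy0, mul_comm]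
    exact h1
  · refine ⟨1, one_pos, fun x => ?_⟩
    by_cases hx : x = 0
    · subst hx; simp [aux_zero h]
    have hx' : 0 < ‖x‖ := norm_pos_iff.2 hx
    exact absurd ⟨‖x‖⁻¹ • x, by simp [norm_smul, hx'.ne']⟩ hne

lemma aux_compact {f : (EuclideanSpace ℝ (Fin N)) → ℝ} (h : IsNormOn f ⊤) (r : ℝ) : IsCompact {x | f x ≤ r} := by
  obtain ⟨c, hc, hle⟩ := aux_lower h
  refine Metric.isCompact_of_isClosed_isBounded (isClosed_le (aux_cont h) continuous_const) ?_
  refine (Metric.isBounded_closedBall (x := (0 : EuclideanSpace ℝ (Fin N))) (r := c * r)).subset fun x hx => ?_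
  simp only [Metric.mem_closedBall, dist_zero_right]
  exact (hle x).trans (by gcongr; exact hx)

lemma aux_scale {V : Type*} [NormedAddCommGroup V] [InnerProductSpace ℝ V]
    [FiniteDimensional ℝ V] [MeasurableSpace V] [BorelSpace V] (g : V → ℝ)
    (hom : ∀ (c : ℝ) x, g (c • x) = |c| * g x) (hdef : ∀ x, g x ≤ 0 → x = 0)
    (r : ℝ) (hr : 0 ≤ r) :
    volume {x | g x ≤ r} = ENNReal.ofReal (r ^ Module.finrank ℝ V) * volume {x | g x ≤ 1} := by
  have h0 : g 0 = 0 := by simpa using hom 0 0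
  rw [← Measure.addHaar_smul_of_nonneg _ hr]
  congr 1
  rcases hr.eq_or_lt with rfl | hr
  · rw [Set.zero_smul_set ⟨0, by simp [h0]⟩]
    ext x
    simp only [Set.mem_ofPred_eq, Set.mem_zero]
    exact ⟨hdef x, fun hx => by rw [hx, h0]⟩
  · ext x
    rw [Set.mem_smul_set_iff_inv_smul_mem₀ hr.ne']
    simp only [Set.mem_ofPred_eq]
    rw [hom, abs_of_pos (by positivity), inv_mul_le_iff₀ hr, mul_one]

lemma aux_prod (T : Submodule ℝ (EuclideanSpace ℝ (Fin N))) (A : Set T) (B : Set Tᗮ) (hA : MeasurableSet A)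
    (hB : MeasurableSet B) :
    volume {d : EuclideanSpace ℝ (Fin N) | T.orthogonalProjectionOnto d ∈ A ∧ Tᗮ.orthogonalProjectionOnto d ∈ B}
      = volume A * volume B := by
  have h := (WithLp.volume_preserving_ofLp T Tᗮ).comp T.orthogonalDecomposition.measurePreserving
  have h2 := h.measure_preimage (hA.prod hB).nullMeasurableSet
  rw [Measure.volume_eq_prod, Measure.prod_prod] at h2
  rw [← h2]
  congr 1
  ext d
  simp

/-- The cylinder `T + B(τ)`, described through the projection on `Tᗮ`. -/
def auxCyl (T : Submodule ℝ (EuclideanSpace ℝ (Fin N))) (nn : EuclideanSpace ℝ (Fin N) → ℝ)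
    (τ : ℝ) : Set (EuclideanSpace ℝ (Fin N)) :=
  {d | Tᗮ.orthogonalProjectionOnto d ∈
    (fun w => Tᗮ.orthogonalProjectionOnto w) '' {w | nn w ≤ τ}}

lemma aux_image_compact {nn : EuclideanSpace ℝ (Fin N) → ℝ} (h : IsNormOn nn ⊤)
    (T : Submodule ℝ (EuclideanSpace ℝ (Fin N))) (τ : ℝ) :
    IsCompact ((fun w => Tᗮ.orthogonalProjectionOnto w) '' {w | nn w ≤ τ}) :=
  (aux_compact h τ).image (Tᗮ.orthogonalProjectionOnto).continuous

lemma aux_cyl_meas {nn : EuclideanSpace ℝ (Fin N) → ℝ} (h : IsNormOn nn ⊤)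
    (T : Submodule ℝ (EuclideanSpace ℝ (Fin N))) (τ : ℝ) : MeasurableSet (auxCyl T nn τ) :=
  ((aux_image_compact h T τ).isClosed.preimage
    (Tᗮ.orthogonalProjectionOnto).continuous).measurableSet

lemma aux_proj_eq (T : Submodule ℝ (EuclideanSpace ℝ (Fin N))) (x y : EuclideanSpace ℝ (Fin N)) :
    Tᗮ.orthogonalProjectionOnto x = Tᗮ.orthogonalProjectionOnto y ↔ x - y ∈ T := by
  rw [← sub_eq_zero, ← map_sub, Submodule.orthogonalProjectionOnto_eq_zero_iff,
    Submodule.orthogonal_orthogonal]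

lemma aux_cyl_iff {nn : EuclideanSpace ℝ (Fin N) → ℝ}
    (T : Submodule ℝ (EuclideanSpace ℝ (Fin N))) (τ : ℝ) (d : EuclideanSpace ℝ (Fin N)) :
    d ∈ auxCyl T nn τ ↔ ∃ b, nn b ≤ τ ∧ d - b ∈ T := by
  constructor
  · rintro ⟨b, hb, h⟩
    exact ⟨b, hb, (aux_proj_eq T d b).1 h.symm⟩
  · rintro ⟨b, hb, h⟩
    exact ⟨b, hb, ((aux_proj_eq T d b).2 h).symm⟩

lemma aux_decomp (T : Submodule ℝ (EuclideanSpace ℝ (Fin N))) (d : EuclideanSpace ℝ (Fin N)) :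
    d = (T.orthogonalProjectionOnto d : EuclideanSpace ℝ (Fin N))
      + (Tᗮ.orthogonalProjectionOnto d : EuclideanSpace ℝ (Fin N)) := by
  have := T.starProjection_add_starProjection_orthogonal d
  exact this.symm

lemma aux_image_scale {nn : EuclideanSpace ℝ (Fin N) → ℝ} (h : IsNormOn nn ⊤)
    (T : Submodule ℝ (EuclideanSpace ℝ (Fin N))) (τ : ℝ) (hτ : 0 < τ) :
    volume ((fun w => Tᗮ.orthogonalProjectionOnto w) '' {w | nn w ≤ τ})
      = ENNReal.ofReal (τ ^ Module.finrank ℝ Tᗮ) *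
        volume ((fun w => Tᗮ.orthogonalProjectionOnto w) '' {w | nn w ≤ 1}) := by
  rw [← Measure.addHaar_smul_of_nonneg _ hτ.le]
  congr 1
  ext x
  constructor
  · rintro ⟨w, hw, rfl⟩
    refine ⟨_, ⟨τ⁻¹ • w, ?_, rfl⟩, ?_⟩
    · change nn _ ≤ 1
      rw [h.2.2.1 _ _ trivial, abs_of_pos (by positivity), inv_mul_le_iff₀ hτ, mul_one]
      exact hw
    · simp [smul_smul, hτ.ne']
  · rintro ⟨_, ⟨w, hw, rfl⟩, rfl⟩
    refine ⟨τ • w, ?_, by simp⟩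
    change nn _ ≤ τ
    rw [h.2.2.1 _ _ trivial, abs_of_pos hτ]
    exact mul_le_of_le_one_right hτ.le hw

/-- Volume of the product set with the slice radius `r`. -/
lemma aux_box {nn fd : EuclideanSpace ℝ (Fin N) → ℝ} (h : IsNormOn nn ⊤) (hf : IsNormOn fd ⊤)
    (T : Submodule ℝ (EuclideanSpace ℝ (Fin N))) (K : ℕ) (hT : Module.finrank ℝ T = K)
    (τ r : ℝ) (hτ : 0 < τ) (hr : 0 ≤ r) :
    volume {d : EuclideanSpace ℝ (Fin N) |
        T.orthogonalProjectionOnto d ∈ {t : T | fd t ≤ r} ∧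
        Tᗮ.orthogonalProjectionOnto d ∈
          (fun w => Tᗮ.orthogonalProjectionOnto w) '' {w | nn w ≤ τ}}
      = (volume ((fun w => Tᗮ.orthogonalProjectionOnto w) '' {w | nn w ≤ 1})
          * volume {t : T | fd t ≤ 1}) * ENNReal.ofReal (τ ^ (N - K) * r ^ K) := by
  have hT' : Module.finrank ℝ Tᗮ = N - K := by
    have := T.finrank_add_finrank_orthogonal
    rw [hT, finrank_euclideanSpace_fin] at this
    omega
  rw [aux_prod T _ _ ?_ (aux_image_compact h T τ).isClosed.measurableSet,
    aux_image_scale h T τ hτ, hT',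
    aux_scale (fun t : T => fd t) (fun c x => hf.2.2.1 c x trivial) ?_ r hr, hT,
    ENNReal.ofReal_mul (by positivity)]
  · ring
  · intro x hx
    exact Subtype.ext (aux_eq_zero hf _ hx)
  · exact (isClosed_le ((aux_cont hf).comp continuous_subtype_val) continuous_const).measurableSet

lemma aux_delta {nn fd : EuclideanSpace ℝ (Fin N) → ℝ} (h : IsNormOn nn ⊤) (hf : IsNormOn fd ⊤) :
    ∃ δ : ℝ, 0 ≤ δ ∧ ∀ (T : Submodule ℝ (EuclideanSpace ℝ (Fin N)))
      (b : EuclideanSpace ℝ (Fin N)), fd (T.orthogonalProjectionOnto b) ≤ δ * nn b := by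
  obtain ⟨C, hC, hC'⟩ := aux_upper hf
  obtain ⟨c, hc, hc'⟩ := aux_lower h
  refine ⟨C * c, by positivity, fun T b => ?_⟩
  calc fd (T.orthogonalProjectionOnto b) ≤ C * ‖T.orthogonalProjectionOnto b‖ := hC' _
    _ ≤ C * ‖b‖ := by gcongr; exact T.norm_orthogonalProjectionOnto_apply_le b
    _ ≤ C * (c * nn b) := by gcongr; exact hc' b
    _ = _ := by ring

lemma aux_cyl_upper {nn fd : EuclideanSpace ℝ (Fin N) → ℝ} (h : IsNormOn nn ⊤)
    (hf : IsNormOn fd ⊤) (δ : ℝ) (hδ0 : 0 ≤ δ)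
    (hδ : ∀ (T : Submodule ℝ (EuclideanSpace ℝ (Fin N)))
      (b : EuclideanSpace ℝ (Fin N)), fd (T.orthogonalProjectionOnto b) ≤ δ * nn b)
    (T : Submodule ℝ (EuclideanSpace ℝ (Fin N))) (K : ℕ) (hT : Module.finrank ℝ T = K)
    (τ θ : ℝ) (hτ : 0 < τ) (hθ : 0 < θ) :
    volume (auxCyl T nn τ ∩ {w | fd w ≤ θ}) ≤
      (volume ((fun w => Tᗮ.orthogonalProjectionOnto w) '' {w | nn w ≤ 1})
          * volume {t : T | fd t ≤ 1}) * ENNReal.ofReal (τ ^ (N - K) * (θ + δ * τ) ^ K) := by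
  rw [← aux_box h hf T K hT τ _ hτ (by positivity)]
  refine measure_mono ?_
  rintro d ⟨hd, hd2⟩
  refine ⟨?_, hd⟩
  obtain ⟨b, hb, hbd⟩ := hd
  have h1 := hδ Tᗮ b
  have h2 : δ * nn b ≤ δ * τ := by gcongr; exact hb
  change fd _ ≤ _
  have h3 : (T.orthogonalProjectionOnto d : EuclideanSpace ℝ (Fin N))
      = d + -(Tᗮ.orthogonalProjectionOnto b : EuclideanSpace ℝ (Fin N)) := by
    have h4 := aux_decomp T d
    have h5 : Tᗮ.orthogonalProjectionOnto b = Tᗮ.orthogonalProjectionOnto d := hbd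
    rw [h5]
    nth_rewrite 2 [h4]
    abel
  rw [h3]
  have h6 := hf.2.2.2 d trivial (-(Tᗮ.orthogonalProjectionOnto b : EuclideanSpace ℝ (Fin N))) trivial
  rw [aux_neg hf] at h6
  have h7 : fd d ≤ θ := hd2
  linarith

lemma aux_cyl_lower {nn fd : EuclideanSpace ℝ (Fin N) → ℝ} (h : IsNormOn nn ⊤)
    (hf : IsNormOn fd ⊤) (δ : ℝ) (hδ0 : 0 ≤ δ)
    (hδ : ∀ (T : Submodule ℝ (EuclideanSpace ℝ (Fin N)))
      (b : EuclideanSpace ℝ (Fin N)), fd (T.orthogonalProjectionOnto b) ≤ δ * nn b)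
    (T : Submodule ℝ (EuclideanSpace ℝ (Fin N))) (K : ℕ) (hT : Module.finrank ℝ T = K)
    (τ θ : ℝ) (hτ : 0 < τ) (hθ : δ * τ ≤ θ) :
    (volume ((fun w => Tᗮ.orthogonalProjectionOnto w) '' {w | nn w ≤ 1})
          * volume {t : T | fd t ≤ 1}) * ENNReal.ofReal (τ ^ (N - K) * (θ - δ * τ) ^ K)
      ≤ volume (auxCyl T nn τ ∩ {w | fd w ≤ θ}) := by
  rw [← aux_box h hf T K hT τ _ hτ (by linarith)]
  refine measure_mono ?_
  rintro d ⟨hd2, hd⟩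
  refine ⟨hd, ?_⟩
  obtain ⟨b, hb, hbd⟩ := hd
  have h1 := hδ Tᗮ b
  have h2 : δ * nn b ≤ δ * τ := by gcongr; exact hb
  change fd _ ≤ _
  have h5 : Tᗮ.orthogonalProjectionOnto b = Tᗮ.orthogonalProjectionOnto d := hbd
  rw [h5] at h1
  have h6 := hf.2.2.2 (T.orthogonalProjectionOnto d : EuclideanSpace ℝ (Fin N)) trivial
    (Tᗮ.orthogonalProjectionOnto d : EuclideanSpace ℝ (Fin N)) trivial
  rw [← aux_decomp T d] at h6
  have h7 : fd (T.orthogonalProjectionOnto d : EuclideanSpace ℝ (Fin N)) ≤ θ - δ * τ := hd2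
  linarith

/-- Control of the distance to `T₁ ⊓ T₂`. -/
lemma aux_inter_dist (T₁ T₂ : Submodule ℝ (EuclideanSpace ℝ (Fin N))) :
    ∃ M : ℝ, 0 < M ∧ ∀ (d : EuclideanSpace ℝ (Fin N)) (ρ : ℝ),
      ‖T₁ᗮ.orthogonalProjectionOnto d‖ ≤ ρ → ‖T₂ᗮ.orthogonalProjectionOnto d‖ ≤ ρ →
      ‖(T₁ ⊓ T₂)ᗮ.orthogonalProjectionOnto d‖ ≤ M * ρ := by
  let L : EuclideanSpace ℝ (Fin N) →ₗ[ℝ] T₁ᗮ × T₂ᗮ :=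
    (T₁ᗮ.orthogonalProjectionOnto : EuclideanSpace ℝ (Fin N) →ₗ[ℝ] T₁ᗮ).prod
      (T₂ᗮ.orthogonalProjectionOnto : EuclideanSpace ℝ (Fin N) →ₗ[ℝ] T₂ᗮ)
  have hL : ∀ x, L x = 0 ↔ x ∈ T₁ ⊓ T₂ := by
    intro x
    have e1 := aux_proj_eq T₁ x 0
    have e2 := aux_proj_eq T₂ x 0
    rw [sub_zero, map_zero] at e1 e2
    rw [Submodule.mem_inf, ← e1, ← e2]
    exact Prod.mk_eq_zero
  obtain ⟨M, hM, hA⟩ := (L.comp (T₁ ⊓ T₂)ᗮ.subtype).exists_antilipschitzWith (by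
    rw [LinearMap.ker_eq_bot']
    intro x hx
    have h1 : (x : EuclideanSpace ℝ (Fin N)) ∈ T₁ ⊓ T₂ := (hL x).1 hx
    have h2 := x.2
    rw [Submodule.mem_orthogonal] at h2
    have := h2 _ h1
    exact Subtype.ext (inner_self_eq_zero.1 this))
  refine ⟨M, hM, fun d ρ h1 h2 => ?_⟩
  have h3 := hA.le_mul_dist ((T₁ ⊓ T₂)ᗮ.orthogonalProjectionOnto d) 0
  rw [map_zero, dist_zero_right, dist_zero_right] at h3
  refine h3.trans ?_
  gcongr
  have h4 : (L.comp (T₁ ⊓ T₂)ᗮ.subtype) ((T₁ ⊓ T₂)ᗮ.orthogonalProjectionOnto d) = L d := by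
    have h5 := aux_decomp (T₁ ⊓ T₂) d
    have h6 := (hL _).2 ((T₁ ⊓ T₂).orthogonalProjectionOnto d).2
    conv_rhs => rw [h5, map_add, h6, zero_add]
    rfl
  rw [h4]
  exact max_le h1 h2

lemma aux_inter {nn fd : EuclideanSpace ℝ (Fin N) → ℝ} (h : IsNormOn nn ⊤)
    (hf : IsNormOn fd ⊤) (T₁ T₂ : Submodule ℝ (EuclideanSpace ℝ (Fin N))) (K : ℕ)
    (hT₁ : Module.finrank ℝ T₁ = K) (hT₂ : Module.finrank ℝ T₂ = K) (hne : T₁ ≠ T₂) :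
    ∃ M : ℝ, 0 ≤ M ∧ ∀ τ θ : ℝ, 0 < τ → τ ≤ θ →
      volume ((auxCyl T₁ nn τ ∩ {w | fd w ≤ θ}) ∩ (auxCyl T₂ nn τ ∩ {w | fd w ≤ θ})) ≤
        ENNReal.ofReal (M * (τ / θ) ^ (N - K + 1)) * ENNReal.ofReal (θ ^ N) := by
  obtain ⟨c, hc, hc'⟩ := aux_lower h
  obtain ⟨c₂, hc₂, hc₂'⟩ := aux_lower hf
  obtain ⟨M, hM, hM'⟩ := aux_inter_dist T₁ T₂
  set S := T₁ ⊓ T₂ with hS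
  have hle : S ≤ T₁ := inf_le_left
  have hlt : S < T₁ := by
    refine lt_of_le_of_ne hle fun heq => hne ?_
    have : T₁ ≤ T₂ := by rw [← heq]; exact inf_le_right
    exact Submodule.eq_of_le_of_finrank_eq this (hT₁.trans hT₂.symm)
  have hs : Module.finrank ℝ S < K := hT₁ ▸ Submodule.finrank_lt_finrank_of_lt hlt
  have hSN := S.finrank_add_finrank_orthogonal
  have hKN : K ≤ N := by
    have := T₁.finrank_le
    rwa [hT₁, finrank_euclideanSpace_fin] at this
  rw [finrank_euclideanSpace_fin] at hSN
  set s := Module.finrank ℝ S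
  set s' := Module.finrank ℝ Sᗮ
  set v := volume (Metric.closedBall (0 : S) 1)
  set v' := volume (Metric.closedBall (0 : Sᗮ) 1)
  have hv : v ≠ ⊤ := measure_closedBall_lt_top.ne
  have hv' : v' ≠ ⊤ := measure_closedBall_lt_top.ne
  refine ⟨c₂ ^ s * v.toReal * ((M * c) ^ s' * v'.toReal), by positivity, fun τ θ hτ hθ => ?_⟩
  have hθ0 : 0 < θ := hτ.trans_le hθ
  have hcyl : ∀ (T : Submodule ℝ (EuclideanSpace ℝ (Fin N))) d, d ∈ auxCyl T nn τ →
      ‖Tᗮ.orthogonalProjectionOnto d‖ ≤ c * τ := by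
    rintro T d ⟨b, hb, hbd⟩
    rw [← hbd]
    calc _ ≤ ‖b‖ := Tᗮ.norm_orthogonalProjectionOnto_apply_le b
      _ ≤ c * nn b := hc' b
      _ ≤ c * τ := by gcongr; exact hb
  calc _ ≤ volume {d : EuclideanSpace ℝ (Fin N) |
        S.orthogonalProjectionOnto d ∈ Metric.closedBall (0 : S) (c₂ * θ) ∧
        Sᗮ.orthogonalProjectionOnto d ∈ Metric.closedBall (0 : Sᗮ) (M * (c * τ))} := by
        refine measure_mono ?_
        rintro d ⟨⟨hd1, hd⟩, ⟨hd2, -⟩⟩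
        refine ⟨?_, ?_⟩
        · rw [mem_closedBall_zero_iff]
          calc _ ≤ ‖d‖ := S.norm_orthogonalProjectionOnto_apply_le d
            _ ≤ c₂ * fd d := hc₂' d
            _ ≤ c₂ * θ := by gcongr; exact hd
        · rw [mem_closedBall_zero_iff]
          exact hM' d _ (hcyl _ d hd1) (hcyl _ d hd2)
    _ = (ENNReal.ofReal ((c₂ * θ) ^ s) * v) * (ENNReal.ofReal ((M * (c * τ)) ^ s') * v') := by
        rw [aux_prod S _ _ Metric.isClosed_closedBall.measurableSet
          Metric.isClosed_closedBall.measurableSet,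
          Measure.addHaar_closedBall' volume (0 : S) (r := c₂ * θ) (by positivity),
          Measure.addHaar_closedBall' volume (0 : Sᗮ) (r := M * (c * τ)) (by positivity)]
    _ = ENNReal.ofReal (((c₂ * θ) ^ s * v.toReal) * ((M * (c * τ)) ^ s' * v'.toReal)) := by
        rw [ENNReal.ofReal_mul (by positivity), ENNReal.ofReal_mul (by positivity),
          ENNReal.ofReal_mul (by positivity), ENNReal.ofReal_toReal hv, ENNReal.ofReal_toReal hv']
    _ ≤ _ := by
        rw [← ENNReal.ofReal_mul (by positivity)]
        apply ENNReal.ofReal_le_ofReal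
        have e1 : ((c₂ * θ) ^ s * v.toReal) * ((M * (c * τ)) ^ s' * v'.toReal)
            = (c₂ ^ s * v.toReal * ((M * c) ^ s' * v'.toReal)) * (θ ^ s * τ ^ s') := by
          simp only [mul_pow]; ring
        rw [e1, mul_assoc _ (_ ^ (N - K + 1))]
        refine mul_le_mul_of_nonneg_left ?_ (by positivity)
        have e2 : θ ^ s * τ ^ s' = (τ / θ) ^ s' * θ ^ N := by
          rw [← hSN, pow_add, div_pow]; field_simp
        rw [e2]
        gcongr ?_ * _
        apply pow_le_pow_of_le_one (by positivity) ((div_le_one hθ0).2 hθ)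
        omega

/-- Bonferroni inequality. -/
lemma aux_bonf {α κ : Type*} [MeasurableSpace α] [DecidableEq κ] (μ : Measure α) (A : κ → Set α)
    (hA : ∀ k, MeasurableSet (A k)) (s : Finset κ) :
    ∑ k ∈ s, μ (A k) ≤ μ (⋃ k ∈ s, A k) +
      ∑ k ∈ s, ∑ l ∈ s, if k = l then 0 else μ (A k ∩ A l) := by
  induction s using Finset.induction_on with
  | empty => simp
  | insert a s ha ih =>
    rw [Finset.sum_insert ha, Finset.sum_insert ha, Finset.set_biUnion_insert]
    have h1 : μ (A a) + μ (⋃ k ∈ s, A k) = μ (A a ∪ ⋃ k ∈ s, A k) + μ (A a ∩ ⋃ k ∈ s, A k) :=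
      (measure_union_add_inter (A a) (Finset.measurableSet_biUnion s fun k _ => hA k)).symm
    have h2 : μ (A a ∩ ⋃ k ∈ s, A k) ≤ ∑ l ∈ s, if a = l then 0 else μ (A a ∩ A l) := by
      rw [Set.inter_iUnion₂]
      refine (measure_biUnion_finset_le s _).trans (Finset.sum_le_sum fun l hl => ?_)
      have hne : a ≠ l := by rintro rfl; exact ha hl
      rw [if_neg hne]
    have h3 : ∑ l ∈ s, (if a = l then 0 else μ (A a ∩ A l)) ≤
        ∑ l ∈ insert a s, (if a = l then 0 else μ (A a ∩ A l)) :=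
      Finset.sum_le_sum_of_subset (Finset.subset_insert a s)
    have h4 : ∑ k ∈ s, ∑ l ∈ s, (if k = l then 0 else μ (A k ∩ A l)) ≤
        ∑ k ∈ s, ∑ l ∈ insert a s, (if k = l then 0 else μ (A k ∩ A l)) :=
      Finset.sum_le_sum fun k _ => Finset.sum_le_sum_of_subset (Finset.subset_insert a s)
    calc μ (A a) + ∑ k ∈ s, μ (A k)
        ≤ μ (A a) + (μ (⋃ k ∈ s, A k) +
          ∑ k ∈ s, ∑ l ∈ s, if k = l then 0 else μ (A k ∩ A l)) := by gcongr
      _ = μ (A a ∪ ⋃ k ∈ s, A k) + (μ (A a ∩ ⋃ k ∈ s, A k) +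
          ∑ k ∈ s, ∑ l ∈ s, if k = l then 0 else μ (A k ∩ A l)) := by
          rw [← add_assoc, h1, add_assoc]
      _ ≤ _ := by
          exact add_le_add le_rfl (add_le_add (h2.trans h3) h4)

lemma aux_extend {ι : Type*} [Fintype ι] (ψ : ι → EuclideanSpace ℝ (Fin N))
    (hspan : Submodule.span ℝ (Set.range ψ) = ⊤) (K : ℕ) (hK : K ≤ N) (n : ℕ) :
    ∀ J : Set ι, Module.finrank ℝ (Submodule.span ℝ (ψ '' J)) + n = K →
    ∃ J' : Set ι, J ⊆ J' ∧ Module.finrank ℝ (Submodule.span ℝ (ψ '' J')) = K := by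
  induction n with
  | zero => exact fun J h => ⟨J, subset_rfl, h⟩
  | succ n ih =>
    intro J hJ
    have hne : ∃ i, ψ i ∉ Submodule.span ℝ (ψ '' J) := by
      by_contra! hcon
      have : (⊤ : Submodule ℝ (EuclideanSpace ℝ (Fin N))) ≤ Submodule.span ℝ (ψ '' J) := by
        rw [← hspan, Submodule.span_le]
        rintro _ ⟨i, rfl⟩
        exact hcon i
      rw [top_le_iff.1 this, finrank_top, finrank_euclideanSpace_fin] at hJ
      omega
    obtain ⟨i, hi⟩ := hne
    have h1 : Submodule.span ℝ (ψ '' J) < Submodule.span ℝ (ψ '' insert i J) := by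
      refine lt_of_le_of_ne (Submodule.span_mono (Set.image_mono (Set.subset_insert i J))) ?_
      intro heq
      exact hi (heq ▸ Submodule.subset_span ⟨i, Set.mem_insert i J, rfl⟩)
    have h2 := Submodule.finrank_lt_finrank_of_lt h1
    have h3 : Module.finrank ℝ (Submodule.span ℝ (ψ '' insert i J)) ≤
        1 + Module.finrank ℝ (Submodule.span ℝ (ψ '' J)) := by
      rw [Set.image_insert_eq, Submodule.span_insert]
      refine (Submodule.finrank_add_le_finrank_add_finrank _ _).trans ?_
      gcongr
      exact (finrank_span_le_card _).trans (by simp)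
    obtain ⟨J', hJ', hf⟩ := ih (insert i J) (by omega)
    exact ⟨J', (Set.subset_insert i J).trans hJ', hf⟩

lemma aux_valP {ι : Type*} [Fintype ι] (ψ : ι → EuclideanSpace ℝ (Fin N))
    (hspan : Submodule.span ℝ (Set.range ψ) = ⊤) (nn : EuclideanSpace ℝ (Fin N) → ℝ)
    (hnn : IsNormOn nn ⊤) (K : ℕ) (hK : K ≤ N) (𝒥 : Set (Set ι)) (h𝒥 : IsJFamily ψ K 𝒥)
    (τ : ℝ) (hτ : 0 < τ) (d : EuclideanSpace ℝ (Fin N)) :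
    valP ψ nn τ d ≤ K ↔ ∃ J ∈ 𝒥, d ∈ auxCyl (Submodule.span ℝ (ψ '' J)) nn τ := by
  constructor
  · intro hval
    have hmem : valP ψ nn τ d ∈ {k : ℕ | ∃ c : ι → ℝ, nn ((∑ i, c i • ψ i) - d) ≤ τ ∧
        {i | c i ≠ 0}.ncard = k} := by
      apply Nat.sInf_mem
      have hd : d ∈ Submodule.span ℝ (Set.range ψ) := hspan ▸ trivial
      obtain ⟨c, hc⟩ := (Submodule.mem_span_range_iff_exists_fun ℝ).1 hd
      exact ⟨_, c, by rw [hc, sub_self, aux_zero hnn]; exact hτ.le, rfl⟩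
    obtain ⟨c, hc, hcard⟩ := hmem
    have hfin : Module.finrank ℝ (Submodule.span ℝ (ψ '' {i | c i ≠ 0})) ≤ K := by
      classical
      refine (finrank_span_le_card _).trans ?_
      rw [← Set.ncard_eq_toFinset_card']
      exact (Set.ncard_image_le (Set.toFinite _)).trans (hcard.trans_le hval)
    obtain ⟨J', hJ', hf⟩ := aux_extend ψ hspan K hK _ _ (Nat.add_sub_cancel' hfin)
    obtain ⟨J, hJ, hJs⟩ := h𝒥.2.2 J' hf
    refine ⟨J, hJ, ?_⟩
    rw [hJs, aux_cyl_iff]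
    refine ⟨d - ∑ i, c i • ψ i, ?_, ?_⟩
    · rw [← aux_neg hnn, neg_sub]; exact hc
    · rw [sub_sub_cancel]
      refine Submodule.sum_mem _ fun i _ => ?_
      by_cases hi : c i = 0
      · simp [hi]
      · exact Submodule.smul_mem _ _ (Submodule.subset_span ⟨i, hJ' hi, rfl⟩)
  · rintro ⟨J, hJ, hd⟩
    obtain ⟨b, hb, hbd⟩ := (aux_cyl_iff _ _ _).1 hd
    obtain ⟨κ, a, ha, hsp, hli⟩ := exists_linearIndependent' ℝ (fun j : J => ψ j)
    have hrange : Set.range (fun j : J => ψ j) = ψ '' J := by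
      ext x; simp
    rw [hrange] at hsp
    have hfinκ : Finite κ := Finite.of_injective a ha
    have := Fintype.ofFinite κ
    have hcard : Nat.card κ = K := by
      rw [← h𝒥.1 J hJ, ← hsp, finrank_span_eq_card hli, Nat.card_eq_fintype_card]
    have hrange2 : Set.range ((fun j : J => ψ j) ∘ a) = ψ '' (Set.range fun k => (a k : ι)) := by
      rw [← Set.range_comp]; rfl
    rw [← hsp, hrange2, Finsupp.mem_span_image_iff_linearCombination] at hbd
    obtain ⟨l, hl, hl2⟩ := hbd
    rw [Finsupp.linearCombination_apply, Finsupp.sum_fintype _ _ (by simp)] at hl2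
    have h1 : valP ψ nn τ d ≤ {i | l i ≠ 0}.ncard := by
      apply Nat.sInf_le
      refine ⟨l, ?_, rfl⟩
      rw [hl2, sub_sub_cancel_left, aux_neg hnn]
      exact hb
    refine h1.trans ?_
    calc {i | l i ≠ 0}.ncard ≤ (Set.range fun k => (a k : ι)).ncard := by
          refine Set.ncard_le_ncard ?_ (Set.toFinite _)
          intro i hi
          exact hl (by simpa using hi)
      _ ≤ Nat.card κ := by
          rw [← Set.image_univ, ← Set.ncard_univ]
          exact Set.ncard_image_le (Set.toFinite _)
      _ = K := hcard

end helpers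

/-- if `d` is uniformly distributed on `B_{f_d}(θ)`, then
`P(val(P_d) ≤ K) = μ_N(A_K(τ) ∩ B_{f_d}(θ)) / (θ^N μ_N(B_{f_d}(1)))`, and this probability
is sandwiched between
`Ĉ_K/μ_N(B_{f_d}(1)) (τ/θ)^{N−K}(1 ∓ δ̂_K τ/θ)^K` up to the error `ε₀/μ_N(B_{f_d}(1))`.
The uniform probability of a set `S` is `volume (S ∩ B_{f_d}(θ)) / volume (B_{f_d}(θ))`. -/
theorem stmt16 {N : ℕ} {ι : Type*} [Fintype ι]
    (ψ : ι → EuclideanSpace ℝ (Fin N))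
    (hspan : Submodule.span ℝ (Set.range ψ) = ⊤)
    (nn fd : EuclideanSpace ℝ (Fin N) → ℝ)
    (hnn : IsNormOn nn ⊤) (hfd : IsNormOn fd ⊤)
    (K : ℕ) (hK : K ≤ N)
    (𝒥 : Set (Set ι)) (h𝒥 : IsJFamily ψ K 𝒥)
    (CK : ENNReal) (hCK : CK = ∑' J : 𝒥, CJ ψ nn fd (J : Set ι)) :
    (∀ θ : ℝ, 0 < θ →
      volume {w : EuclideanSpace ℝ (Fin N) | fd w ≤ θ} =
        ENNReal.ofReal (θ ^ N) * volume {w : EuclideanSpace ℝ (Fin N) | fd w ≤ 1}) ∧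
    ∃ (δhat Δ : ℝ) (ε₀ : ℝ → ℝ → ℝ), 0 ≤ δhat ∧ δhat ≤ Δ ∧
      (∀ τ θ : ℝ, 0 < τ → 0 < θ → Δ * τ ≤ θ →
        0 ≤ ε₀ τ θ ∧
        CK / volume {w : EuclideanSpace ℝ (Fin N) | fd w ≤ 1}
            * ENNReal.ofReal ((τ / θ) ^ (N - K) * (1 - δhat * (τ / θ)) ^ K)
          - ENNReal.ofReal (ε₀ τ θ) / volume {w : EuclideanSpace ℝ (Fin N) | fd w ≤ 1} ≤
          volume ({d : EuclideanSpace ℝ (Fin N) | valP ψ nn τ d ≤ K} ∩ {w | fd w ≤ θ})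
            / volume {w : EuclideanSpace ℝ (Fin N) | fd w ≤ θ} ∧
        volume ({d : EuclideanSpace ℝ (Fin N) | valP ψ nn τ d ≤ K} ∩ {w | fd w ≤ θ})
            / volume {w : EuclideanSpace ℝ (Fin N) | fd w ≤ θ} ≤
          CK / volume {w : EuclideanSpace ℝ (Fin N) | fd w ≤ 1}
            * ENNReal.ofReal ((τ / θ) ^ (N - K) * (1 + δhat * (τ / θ)) ^ K)) ∧
      (∃ Cerr : ℝ, ∀ τ θ : ℝ, 0 < τ → 0 < θ → Δ * τ ≤ θ →
        ε₀ τ θ ≤ Cerr * (τ / θ) ^ (N - K + 1)) := by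
  classical
  have hhom : ∀ θ : ℝ, 0 < θ →
      volume {w : EuclideanSpace ℝ (Fin N) | fd w ≤ θ} =
        ENNReal.ofReal (θ ^ N) * volume {w : EuclideanSpace ℝ (Fin N) | fd w ≤ 1} := by
    intro θ hθ
    have := aux_scale fd (fun c x => hfd.2.2.1 c x trivial) (aux_eq_zero hfd) θ hθ.le
    rwa [finrank_euclideanSpace_fin] at this
  refine ⟨hhom, ?_⟩
  obtain ⟨δ, hδ0, hδ⟩ := aux_delta hnn hfd
  set V := volume {w : EuclideanSpace ℝ (Fin N) | fd w ≤ 1} with hV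
  have hVtop : V ≠ ⊤ := (aux_compact hfd 1).measure_lt_top.ne
  have hV0 : V ≠ 0 := by
    have hopen : IsOpen {w : EuclideanSpace ℝ (Fin N) | fd w < 1} :=
      isOpen_lt (aux_cont hfd) continuous_const
    have h1 : 0 < volume {w : EuclideanSpace ℝ (Fin N) | fd w < 1} :=
      hopen.measure_pos _ ⟨0, by change fd 0 < 1; rw [aux_zero hfd]; exact one_pos⟩
    exact (h1.trans_le (measure_mono fun w (hw : fd w < 1) => show fd w ≤ 1 from hw.le)).ne'
  have := Fintype.ofFinite 𝒥
  let T : 𝒥 → Submodule ℝ (EuclideanSpace ℝ (Fin N)) := fun J => Submodule.span ℝ (ψ '' (J : Set ι))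
  have hT : ∀ J, Module.finrank ℝ (T J) = K := fun J => h𝒥.1 J J.2
  have hTne : ∀ J J' : 𝒥, J ≠ J' → T J ≠ T J' := fun J J' hne =>
    h𝒥.2.1 J J.2 J' J'.2 (fun h => hne (Subtype.ext h))
  have hpair : ∀ J J' : 𝒥, ∃ M : ℝ, 0 ≤ M ∧ ∀ τ θ : ℝ, 0 < τ → τ ≤ θ →
      (if J = J' then 0 else volume ((auxCyl (T J) nn τ ∩ {w | fd w ≤ θ}) ∩
        (auxCyl (T J') nn τ ∩ {w | fd w ≤ θ}))) ≤
        ENNReal.ofReal (M * (τ / θ) ^ (N - K + 1)) * ENNReal.ofReal (θ ^ N) := by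
    intro J J'
    by_cases hJ : J = J'
    · exact ⟨0, le_rfl, fun τ θ _ _ => by simp [hJ]⟩
    · simp only [if_neg hJ]
      exact aux_inter hnn hfd (T J) (T J') K (hT J) (hT J') (hTne J J' hJ)
  choose M hM0 hM using hpair
  let Mt : ℝ := ∑ J, ∑ J', M J J'
  have hMt : 0 ≤ Mt := Finset.sum_nonneg fun J _ => Finset.sum_nonneg fun J' _ => hM0 J J'
  have hCK' : CK = ∑ J : 𝒥, CJ ψ nn fd (J : Set ι) := by rw [hCK, tsum_fintype]
  refine ⟨δ, max 1 δ, fun τ θ => Mt * (τ / θ) ^ (N - K + 1), hδ0, le_max_right _ _, ?_,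
    ⟨Mt, fun τ θ _ _ _ => le_rfl⟩⟩
  intro τ θ hτ hθ hΔ
  have hτθ : τ ≤ θ := by
    have : 1 * τ ≤ max 1 δ * τ := by gcongr; exact le_max_left _ _
    linarith
  have hδθ : δ * τ ≤ θ := by
    have : δ * τ ≤ max 1 δ * τ := by gcongr; exact le_max_right _ _
    linarith
  have hset : {d : EuclideanSpace ℝ (Fin N) | valP ψ nn τ d ≤ K} ∩ {w | fd w ≤ θ}
      = ⋃ J ∈ (Finset.univ : Finset 𝒥), (auxCyl (T J) nn τ ∩ {w | fd w ≤ θ}) := by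
    ext d
    simp only [Set.mem_inter_iff, Set.mem_iUnion, Finset.mem_univ, exists_prop, true_and]
    rw [show (d ∈ {d : EuclideanSpace ℝ (Fin N) | valP ψ nn τ d ≤ K}) ↔ valP ψ nn τ d ≤ K
      from Iff.rfl, aux_valP ψ hspan nn hnn K hK 𝒥 h𝒥 τ hτ d]
    constructor
    · rintro ⟨⟨J, hJ, h1⟩, h2⟩
      exact ⟨⟨J, hJ⟩, h1, h2⟩
    · rintro ⟨J, h1, h2⟩
      exact ⟨⟨J, J.2, h1⟩, h2⟩
  rw [hset, hhom θ hθ]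
  set m := volume (⋃ J ∈ (Finset.univ : Finset 𝒥), (auxCyl (T J) nn τ ∩ {w | fd w ≤ θ})) with hm
  set a := ENNReal.ofReal (θ ^ N) with ha
  have ha0 : a ≠ 0 := by
    rw [ha, Ne, ENNReal.ofReal_eq_zero, not_le]; positivity
  have hatop : a ≠ ⊤ := ENNReal.ofReal_ne_top
  have hsc : ∀ ε : ℝ, 0 ≤ 1 + ε * (τ / θ) → ENNReal.ofReal (τ ^ (N - K) * (θ + ε * τ) ^ K) =
      ENNReal.ofReal ((τ / θ) ^ (N - K) * (1 + ε * (τ / θ)) ^ K) * a := by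
    intro ε hε
    rw [ha, ← ENNReal.ofReal_mul (by positivity)]
    congr 1
    have e1 : θ + ε * τ = (1 + ε * (τ / θ)) * θ := by field_simp
    have e2 : θ ^ N = θ ^ (N - K) * θ ^ K := by rw [← pow_add, Nat.sub_add_cancel hK]
    rw [e1, e2, mul_pow, div_pow]
    field_simp
  refine ⟨by positivity, ?_, ?_⟩
  · set X := ENNReal.ofReal ((τ / θ) ^ (N - K) * (1 - δ * (τ / θ)) ^ K) with hX
    have hX' : ENNReal.ofReal (τ ^ (N - K) * (θ - δ * τ) ^ K) = X * a := by
      have h1 : 0 ≤ 1 + (-δ) * (τ / θ) := by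
        have : δ * (τ / θ) ≤ 1 := by rw [← mul_div_assoc]; exact (div_le_one hθ).2 hδθ
        linarith
      have := hsc (-δ) h1
      rw [hX]
      simpa only [neg_mul, ← sub_eq_add_neg] using this
    set e := ENNReal.ofReal (Mt * (τ / θ) ^ (N - K + 1)) with he
    have hmain : CK * X * a ≤ m + e * a := by
      calc CK * X * a = ∑ J : 𝒥, CJ ψ nn fd (J : Set ι) * (X * a) := by
            rw [hCK', mul_assoc, Finset.sum_mul]
        _ ≤ ∑ J : 𝒥, volume (auxCyl (T J) nn τ ∩ {w | fd w ≤ θ}) := by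
            refine Finset.sum_le_sum fun J _ => ?_
            rw [← hX']
            exact aux_cyl_lower hnn hfd δ hδ0 hδ (T J) K (hT J) τ θ hτ hδθ
        _ ≤ m + ∑ J : 𝒥, ∑ J' : 𝒥, (if J = J' then 0 else
              volume ((auxCyl (T J) nn τ ∩ {w | fd w ≤ θ}) ∩
              (auxCyl (T J') nn τ ∩ {w | fd w ≤ θ}))) :=
            aux_bonf volume (fun J => auxCyl (T J) nn τ ∩ {w | fd w ≤ θ})
              (fun J => (aux_cyl_meas hnn (T J) τ).inter
                (aux_compact hfd θ).isClosed.measurableSet) Finset.univ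
        _ ≤ m + ∑ J : 𝒥, ∑ J' : 𝒥, ENNReal.ofReal (M J J' * (τ / θ) ^ (N - K + 1)) * a := by
            gcongr with J _ J' _
            exact hM J J' τ θ hτ hτθ
        _ = m + e * a := by
            simp only [← Finset.sum_mul]
            congr 2
            rw [he, Finset.sum_mul, ENNReal.ofReal_sum_of_nonneg]
            · refine Finset.sum_congr rfl fun J _ => ?_
              rw [Finset.sum_mul, ENNReal.ofReal_sum_of_nonneg]
              intro J' _
              have := hM0 J J'
              positivity
            · intro J _
              have : 0 ≤ ∑ J', M J J' := Finset.sum_nonneg fun J' _ => hM0 J J'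
              positivity
    rw [tsub_le_iff_right]
    have h1 : m / (a * V) + e / V = (m + e * a) / (a * V) := by
      rw [ENNReal.add_div]
      congr 1
      rw [mul_comm e a, ENNReal.mul_div_mul_left _ _ ha0 hatop]
    rw [h1, ENNReal.le_div_iff_mul_le (Or.inl (mul_ne_zero ha0 hV0))
      (Or.inl (ENNReal.mul_ne_top hatop hVtop))]
    calc CK / V * X * (a * V) = (CK / V * V) * X * a := by ring
      _ = CK * X * a := by rw [ENNReal.div_mul_cancel hV0 hVtop]
      _ ≤ _ := hmain
  · set X := ENNReal.ofReal ((τ / θ) ^ (N - K) * (1 + δ * (τ / θ)) ^ K) with hX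
    have hX' : ENNReal.ofReal (τ ^ (N - K) * (θ + δ * τ) ^ K) = X * a :=
      hsc δ (by positivity)
    have hmain : m ≤ CK * X * a := by
      calc m ≤ ∑ J : 𝒥, volume (auxCyl (T J) nn τ ∩ {w | fd w ≤ θ}) :=
            measure_biUnion_finset_le _ _
        _ ≤ ∑ J : 𝒥, CJ ψ nn fd (J : Set ι) * (X * a) := by
            refine Finset.sum_le_sum fun J _ => ?_
            rw [← hX']
            exact aux_cyl_upper hnn hfd δ hδ0 hδ (T J) K (hT J) τ θ hτ hθ
        _ = CK * X * a := by rw [hCK', mul_assoc, Finset.sum_mul]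
    apply ENNReal.div_le_of_le_mul
    calc m ≤ CK * X * a := hmain
      _ = (CK / V * V) * X * a := by rw [ENNReal.div_mul_cancel hV0 hVtop]
      _ = CK / V * X * (a * V) := by ring
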